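/- (Thermodynamic limit of the correlation kernel on the continuum) Let g : ℝ → ℝ be an even Schwartz function whose Fourier transform λ^∞(s) := ∫_{−∞}^∞ g(t) e^{2πist} dt satisfies λ^∞(s) ≥ 0 for all s, and let z > 0. For L > 0 and p ∈ ℤ set λ_p^{(L)} := L ∫_{−1/2}^{1/2} g( (L/π) sin(πt) ) e^{2πipt} dt, and assume 1 + z λ_p^{(L)} > 0 for all L > 0 and p ∈ ℤ. Then for all real X, Y: lim_{L→∞} (z/L) Σ_{p∈ℤ} e^{2πi(Y−X)p/L} λ_p^{(L)} / (1 + z λ_p^{(L)}) = z ∫_{−∞}^∞ e^{2πi(Y−X)s} λ^∞(s) / (1 + z λ^∞(s)) ds. -/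

import Mathlib

/-!
After the substitution `u = L t`, the eigenvalue `λ_p^{(L)}` is the value at the frequency `p / L`
of the inverse Fourier transform of `g ∘ chord L` cut off to one period, `chord L` being the signed
chord length. The sum `L⁻¹ ∑ₚ` is the integral over `s` of its summand at `p = ⌊L s⌋`, so the limit
is an instance of dominated convergence, given the following two facts.

* The cut-off function tends to `g` in `L¹`, so `λ_p^{(L)} - λ^∞(p / L)` tends to `0` uniformly in
  `p`. As `1 + z λ^∞` is bounded away from `0`, so is `1 + z λ_p^{(L)}` once `L` is large.
* `λ_p^{(L)} = O((1 + (p / L)²)⁻¹)` uniformly in `L ≥ 1`: integrate by parts twice. There are no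
  boundary terms because `g` is even and the chord is stationary at `± L / 2`, and on one period the
  chord is comparable to the arc, so that `g ∘ chord L` inherits the decay of `g`.
-/

open MeasureTheory Filter Topology
open scoped Real FourierTransform SchwartzMap

/-! ### Quadratic decay and Fourier inversion integrals -/

section QuadraticDecay

variable {E : Type*} [NormedAddCommGroup E]

lemma nonneg_of_norm_le_mul_inv_one_add_sq {y : E} {C u : ℝ}
    (hy : ‖y‖ ≤ C * (1 + u ^ 2)⁻¹) : 0 ≤ C :=
  nonneg_of_mul_nonneg_left ((norm_nonneg y).trans hy) (by positivity)

lemma exists_norm_schwartzMap_le [NormedSpace ℝ E] (f : 𝓢(ℝ, E)) :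
    ∃ C, ∀ x, ‖f x‖ ≤ C * (1 + x ^ 2)⁻¹ := by
  refine ⟨SchwartzMap.seminorm ℝ 0 0 f + SchwartzMap.seminorm ℝ 2 0 f, fun x => ?_⟩
  have h₀ := SchwartzMap.norm_pow_mul_le_seminorm ℝ f 0 x
  have h₂ := SchwartzMap.norm_pow_mul_le_seminorm ℝ f 2 x
  rw [pow_zero, one_mul] at h₀
  rw [Real.norm_eq_abs, sq_abs] at h₂
  rw [← div_eq_mul_inv, le_div_iff₀ (by positivity)]
  linarith

variable [NormedSpace ℂ E]

lemma norm_fourierInv_le_mul_pi {f : ℝ → E} {C : ℝ} (hf : ∀ u, ‖f u‖ ≤ C * (1 + u ^ 2)⁻¹)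
    (s : ℝ) : ‖𝓕⁻ f s‖ ≤ C * π := by
  rw [Real.fourierInv_eq, ← integral_univ_inv_one_add_sq, ← integral_const_mul]
  refine norm_integral_le_of_norm_le (integrable_inv_one_add_sq.const_mul C)
    (.of_forall fun u => ?_)
  rw [Circle.norm_smul]
  exact hf u

lemma tendstoUniformly_fourierInv {ι V : Type*} [NormedAddCommGroup V] [InnerProductSpace ℝ V]
    [FiniteDimensional ℝ V] [MeasurableSpace V] [BorelSpace V] {l : Filter ι} {F : ι → V → E}
    {f : V → E} (hF : ∀ n, Integrable (F n)) (hf : Integrable f)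
    (h : Tendsto (fun n => ∫ v, ‖F n v - f v‖) l (𝓝 0)) :
    TendstoUniformly (fun n => 𝓕⁻ (F n)) (𝓕⁻ f) l := by
  rw [Metric.tendstoUniformly_iff]
  intro ε hε
  filter_upwards [h.eventually_lt_const hε] with n hn w
  refine lt_of_le_of_lt ?_ hn
  have integrable_smul {k : V → E} (hk : Integrable k) :
      Integrable fun v => 𝐞 (inner ℝ v w) • k v := by
    simpa using (Real.fourierIntegral_convergent_iff (-w)).2 hk
  rw [dist_comm, dist_eq_norm, Real.fourierInv_eq, Real.fourierInv_eq,
    ← integral_sub (integrable_smul (hF n)) (integrable_smul hf)]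
  simp only [← smul_sub]
  exact (norm_integral_le_integral_norm _).trans_eq (by simp only [Circle.norm_smul])

end QuadraticDecay

lemma fourierInv_eq_integral_mul_exp (f : ℝ → ℂ) (s : ℝ) :
    𝓕⁻ f s = ∫ t : ℝ, f t * Complex.exp (2 * π * Complex.I * s * t) := by
  rw [Real.fourierInv_eq']
  congr with t
  rw [smul_eq_mul, mul_comm]
  congr 2
  simp only [RCLike.inner_apply, conj_trivial]
  push_cast
  ring

/-! ### The chord -/

/-- The signed length `(L / π) sin (π u / L)` of the chord subtending an arc of length `u` on the
circle of circumference `L`. -/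
noncomputable def chord (L u : ℝ) : ℝ := L / π * Real.sin (π * (u / L))

@[fun_prop]
lemma continuous_chord (L : ℝ) : Continuous (chord L) := by
  unfold chord
  fun_prop

lemma chord_neg (L u : ℝ) : chord L (-u) = -chord L u := by
  simp only [chord, neg_div, mul_neg, Real.sin_neg]

lemma comp_chord_neg {α : Type*} {f : ℝ → α} (hf : ∀ x, f (-x) = f x) (L u : ℝ) :
    (f ∘ chord L) (-u) = (f ∘ chord L) u := by
  simp only [Function.comp_apply, chord_neg, hf]

lemma hasDerivAt_chord {L : ℝ} (hL : L ≠ 0) (u : ℝ) :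
    HasDerivAt (chord L) (Real.cos (π * (u / L))) u := by
  refine (((((hasDerivAt_id u).div_const L).const_mul π).sin).const_mul (L / π)).congr_deriv ?_
  simp only [id]
  field_simp

lemma hasDerivAt_cos_chord (L u : ℝ) :
    HasDerivAt (fun u => Real.cos (π * (u / L))) (-(π / L * Real.sin (π * (u / L)))) u := by
  refine ((((hasDerivAt_id u).div_const L).const_mul π).cos).congr_deriv ?_
  simp only [id]
  ring

lemma tendsto_chord (u : ℝ) : Tendsto (fun L => chord L u) atTop (𝓝 u) := by
  have sinc_lim : Tendsto (fun L : ℝ => u * Real.sinc (π * (u / L))) atTop (𝓝 u) := by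
    simpa using ((Real.continuous_sinc.tendsto _).comp
      ((tendsto_const_nhds.div_atTop tendsto_id).const_mul π)).const_mul u
  refine sinc_lim.congr' ?_
  filter_upwards [eventually_gt_atTop 0] with L hL
  rcases eq_or_ne u 0 with rfl | hu
  · simp [chord]
  · rw [Real.sinc_of_ne_zero (by positivity), chord]
    field_simp

lemma two_div_pi_mul_abs_le_abs_chord {L u : ℝ} (hL : 0 < L) (hu : |u| ≤ L / 2) :
    2 / π * |u| ≤ |chord L u| := by
  have harc : |π * (u / L)| ≤ π / 2 := by
    have : |u| / L ≤ 1 / 2 := by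
      rw [div_le_iff₀ hL]
      linarith
    rw [abs_mul, abs_div, abs_of_pos Real.pi_pos, abs_of_pos hL, div_eq_mul_one_div π 2]
    gcongr
  calc 2 / π * |u| = L / π * (2 / π * |π * (u / L)|) := by
        rw [abs_mul, abs_div, abs_of_pos Real.pi_pos, abs_of_pos hL]
        field_simp
    _ ≤ L / π * |Real.sin (π * (u / L))| := by
        gcongr
        exact Real.mul_abs_le_abs_sin harc
    _ = |chord L u| := by rw [chord, abs_mul, abs_of_pos (by positivity : 0 < L / π)]

lemma one_add_sq_le_four_mul_one_add_chord_sq {L u : ℝ} (hL : 0 < L) (hu : |u| ≤ L / 2) :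
    1 + u ^ 2 ≤ 4 * (1 + chord L u ^ 2) := by
  have half_le : 1 / 2 ≤ 2 / π := by
    rw [div_le_div_iff₀ two_pos Real.pi_pos]
    linarith [Real.pi_le_four]
  have : 1 / 2 * |u| ≤ |chord L u| :=
    (mul_le_mul_of_nonneg_right half_le (abs_nonneg u)).trans
      (two_div_pi_mul_abs_le_abs_chord hL hu)
  rw [← sq_abs u, ← sq_abs (chord L u)]
  nlinarith [abs_nonneg u]

lemma norm_comp_chord_le {E : Type*} [NormedAddCommGroup E] {f : ℝ → E} {C L u : ℝ}
    (hf : ∀ x, ‖f x‖ ≤ C * (1 + x ^ 2)⁻¹) (hL : 0 < L) (hu : |u| ≤ L / 2) :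
    ‖f (chord L u)‖ ≤ 4 * C * (1 + u ^ 2)⁻¹ := by
  have hC := nonneg_of_norm_le_mul_inv_one_add_sq (hf 0)
  calc ‖f (chord L u)‖ ≤ C * (1 + chord L u ^ 2)⁻¹ := hf _
    _ ≤ C * (4 * (1 + u ^ 2)⁻¹) := by
        gcongr
        rw [← div_eq_mul_inv, inv_le_comm₀ (by positivity) (by positivity), inv_div,
          div_le_iff₀' four_pos]
        exact one_add_sq_le_four_mul_one_add_chord_sq hL hu
    _ = 4 * C * (1 + u ^ 2)⁻¹ := by ring

/-! ### Cutting off to one period -/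

section Cutoff

variable {E : Type*} [NormedAddCommGroup E] {L : ℝ}

/-- The restriction of `f` to the period `(-L / 2, L / 2]`, extended by zero. -/
noncomputable def cutoff (L : ℝ) (f : ℝ → E) : ℝ → E := (Set.Ioc (-(L / 2)) (L / 2)).indicator f

lemma norm_cutoff_le {f : ℝ → E} {C : ℝ} (hL : 0 ≤ L)
    (hf : ∀ u, |u| ≤ L / 2 → ‖f u‖ ≤ C * (1 + u ^ 2)⁻¹) (u : ℝ) :
    ‖cutoff L f u‖ ≤ C * (1 + u ^ 2)⁻¹ := by
  have hC : 0 ≤ C := nonneg_of_norm_le_mul_inv_one_add_sq (hf 0 (by rw [abs_zero]; positivity))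
  by_cases hu : u ∈ Set.Ioc (-(L / 2)) (L / 2)
  · rw [cutoff, Set.indicator_of_mem hu]
    exact hf u (abs_le.2 ⟨hu.1.le, hu.2⟩)
  · rw [cutoff, Set.indicator_of_notMem hu, norm_zero]
    positivity

lemma integrable_cutoff {f : ℝ → E} (hf : Continuous f) (L : ℝ) : Integrable (cutoff L f) :=
  (hf.integrableOn_Ioc).integrable_indicator measurableSet_Ioc

lemma tendsto_cutoff_comp_chord {f : ℝ → E} (hf : Continuous f) (u : ℝ) :
    Tendsto (fun L => cutoff L (f ∘ chord L) u) atTop (𝓝 (f u)) := by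
  refine ((hf.tendsto u).comp (tendsto_chord u)).congr' ?_
  filter_upwards [eventually_gt_atTop (2 * |u|)] with L hL
  have hu := abs_lt.1 (show |u| < L / 2 by linarith)
  rw [cutoff, Set.indicator_of_mem (Set.mem_Ioc.2 ⟨hu.1, hu.2.le⟩)]
  rfl

lemma tendsto_integral_norm_cutoff_comp_chord_sub {f : ℝ → E} {C : ℝ} (hf : Continuous f)
    (hC : ∀ x, ‖f x‖ ≤ C * (1 + x ^ 2)⁻¹) :
    Tendsto (fun L => ∫ u, ‖cutoff L (f ∘ chord L) u - f u‖) atTop (𝓝 0) := by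
  rw [← integral_zero ℝ ℝ]
  refine tendsto_integral_filter_of_dominated_convergence (fun u => 5 * C * (1 + u ^ 2)⁻¹)
    (.of_forall fun L => ?_) ?_ (integrable_inv_one_add_sq.const_mul _) (.of_forall fun u => ?_)
  · exact ((integrable_cutoff (by fun_prop) L).aestronglyMeasurable.sub
      hf.aestronglyMeasurable).norm
  · filter_upwards [eventually_gt_atTop 0] with L hL
    refine .of_forall fun u => ?_
    have hcut := norm_cutoff_le hL.le (fun v hv => norm_comp_chord_le hC hL hv) u
    rw [norm_norm]
    exact (norm_sub_le_of_le hcut (hC u)).trans_eq (by ring)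
  · simpa using ((tendsto_cutoff_comp_chord hf u).sub_const (f u)).norm

variable [NormedSpace ℂ E]

lemma fourierInv_cutoff_eq_intervalIntegral (hL : 0 ≤ L) (f : ℝ → E) (s : ℝ) :
    𝓕⁻ (cutoff L f) s = ∫ u in -(L / 2)..L / 2, (𝐞 (u * s) : ℂ) • f u := by
  rw [Real.fourierInv_eq, intervalIntegral.integral_of_le (by linarith),
    ← integral_indicator measurableSet_Ioc]
  congr with u
  by_cases hu : u ∈ Set.Ioc (-(L / 2)) (L / 2)
  · simp [cutoff, Set.indicator_of_mem hu, Circle.smul_def, mul_comm]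
  · simp [cutoff, Set.indicator_of_notMem hu]

lemma hasDerivAt_fourierChar_mul (s u : ℝ) :
    HasDerivAt (fun u => (𝐞 (u * s) : ℂ)) (2 * π * Complex.I * s * 𝐞 (u * s)) u := by
  refine ((Real.hasDerivAt_fourierChar (u * s)).scomp u (hasDerivAt_mul_const s)).congr_deriv ?_
  rw [Complex.real_smul]
  ring

lemma fourierChar_half_period (hL : L ≠ 0) (p : ℤ) :
    (𝐞 (L / 2 * (p / L)) : ℂ) = 𝐞 (-(L / 2) * (p / L)) := by
  rw [Real.fourierChar_apply, Real.fourierChar_apply, Complex.exp_eq_exp_iff_exists_int]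
  refine ⟨p, ?_⟩
  have : (L : ℂ) ≠ 0 := Complex.ofReal_ne_zero.2 hL
  push_cast
  field_simp
  ring

variable [CompleteSpace E]

lemma fourierInv_cutoff_deriv {f f' : ℝ → E} (hL : 0 < L) (hf : ∀ u, HasDerivAt f (f' u) u)
    (hf' : Continuous f') (hper : f (L / 2) = f (-(L / 2))) (p : ℤ) :
    𝓕⁻ (cutoff L f') (p / L) =
      -(2 * π * Complex.I * (p / L : ℝ)) • 𝓕⁻ (cutoff L f) (p / L) := by
  have parts := intervalIntegral.integral_smul_deriv_eq_deriv_smul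
    (a := -(L / 2)) (b := L / 2) (fun u _ => hasDerivAt_fourierChar_mul (p / L) u)
    (fun u _ => hf u) (Continuous.intervalIntegrable (by fun_prop) _ _)
    (hf'.intervalIntegrable _ _)
  rw [fourierChar_half_period hL.ne', hper, sub_self, zero_sub] at parts
  simp only [mul_smul (2 * π * Complex.I * ((p / L : ℝ) : ℂ))] at parts
  rw [fourierInv_cutoff_eq_intervalIntegral hL.le, fourierInv_cutoff_eq_intervalIntegral hL.le,
    parts, intervalIntegral.integral_smul, neg_smul]

lemma norm_fourierInv_cutoff_deriv_deriv {f f' f'' : ℝ → E} (hL : 0 < L)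
    (hf : ∀ u, HasDerivAt f (f' u) u) (hf' : ∀ u, HasDerivAt f' (f'' u) u)
    (hf'' : Continuous f'') (hper : f (L / 2) = f (-(L / 2)))
    (hper' : f' (L / 2) = f' (-(L / 2))) (p : ℤ) :
    ‖𝓕⁻ (cutoff L f'') (p / L)‖ =
      (2 * π) ^ 2 * (p / L : ℝ) ^ 2 * ‖𝓕⁻ (cutoff L f) (p / L)‖ := by
  have hc' : Continuous f' := continuous_iff_continuousAt.2 fun u => (hf' u).continuousAt
  rw [fourierInv_cutoff_deriv hL hf' hf'' hper', fourierInv_cutoff_deriv hL hf hc' hper]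
  simp only [norm_smul, norm_neg, norm_mul, Complex.norm_I, Complex.norm_real, Complex.norm_ofNat,
    Real.norm_eq_abs, abs_of_pos Real.pi_pos]
  rw [← sq_abs (p / L : ℝ)]
  ring

end Cutoff

/-! ### The Fourier integral of a function of the chord -/

section ChordFourierInv

variable {E : Type*} [NormedAddCommGroup E] [NormedSpace ℂ E] {L : ℝ}

/-- The Fourier integral of `f ∘ chord L` over one period, as a function of a real frequency. The
eigenvalue `λ_p^{(L)}` of the kernel `f (chord L (X - Y))` on the circle of circumference `L` is its
value at `p / L`. -/
noncomputable def chordFourierInv (f : ℝ → E) (L : ℝ) : ℝ → E := 𝓕⁻ (cutoff L (f ∘ chord L))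

/-- The derivative of `f ∘ chord L` when `f'` is the derivative of `f`. -/
noncomputable def chordDeriv (f' : ℝ → E) (L u : ℝ) : E := Real.cos (π * (u / L)) • f' (chord L u)

/-- The second derivative of `f ∘ chord L` when `f'` and `f''` are those of `f`. -/
noncomputable def chordDeriv₂ (f' f'' : ℝ → E) (L u : ℝ) : E :=
  Real.cos (π * (u / L)) • chordDeriv f'' L u +
    (-(π / L * Real.sin (π * (u / L)))) • f' (chord L u)

lemma hasDerivAt_comp_chord {f f' : ℝ → E} (hL : L ≠ 0) (hf : ∀ x, HasDerivAt f (f' x) x)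
    (u : ℝ) : HasDerivAt (f ∘ chord L) (chordDeriv f' L u) u :=
  (hf _).scomp u (hasDerivAt_chord hL u)

lemma hasDerivAt_chordDeriv {f' f'' : ℝ → E} (hL : L ≠ 0) (hf' : ∀ x, HasDerivAt f' (f'' x) x)
    (u : ℝ) : HasDerivAt (chordDeriv f' L) (chordDeriv₂ f' f'' L u) u :=
  (hasDerivAt_cos_chord L u).smul (hasDerivAt_comp_chord hL hf' u)

lemma continuous_chordDeriv₂ {f' f'' : ℝ → E} (hf' : Continuous f') (hf'' : Continuous f'')
    (L : ℝ) : Continuous (chordDeriv₂ f' f'' L) := by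
  unfold chordDeriv₂ chordDeriv
  fun_prop

lemma chordDeriv_half_eq (f' : ℝ → E) (hL : L ≠ 0) :
    chordDeriv f' L (L / 2) = chordDeriv f' L (-(L / 2)) := by
  have : π * (L / 2 / L) = π / 2 := by field_simp
  simp only [chordDeriv, neg_div, mul_neg, Real.cos_neg, this, Real.cos_pi_div_two, zero_smul]

lemma norm_chordDeriv₂_le {f' f'' : ℝ → E} {C₁ C₂ u : ℝ} (hL : 1 ≤ L)
    (h₁ : ∀ x, ‖f' x‖ ≤ C₁ * (1 + x ^ 2)⁻¹) (h₂ : ∀ x, ‖f'' x‖ ≤ C₂ * (1 + x ^ 2)⁻¹)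
    (hu : |u| ≤ L / 2) :
    ‖chordDeriv₂ f' f'' L u‖ ≤ 4 * (C₂ + π * C₁) * (1 + u ^ 2)⁻¹ := by
  have hL0 : 0 < L := by linarith
  have hcos := Real.abs_cos_le_one (π * (u / L))
  calc ‖chordDeriv₂ f' f'' L u‖
      ≤ |Real.cos (π * (u / L))| * (|Real.cos (π * (u / L))| * ‖f'' (chord L u)‖) +
          π / L * |Real.sin (π * (u / L))| * ‖f' (chord L u)‖ := by
        refine (norm_add_le _ _).trans_eq ?_
        simp only [chordDeriv, norm_smul, norm_neg, norm_mul, Real.norm_eq_abs,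
          abs_of_pos (by positivity : 0 < π / L)]
    _ ≤ 1 * (1 * (4 * C₂ * (1 + u ^ 2)⁻¹)) + π * 1 * (4 * C₁ * (1 + u ^ 2)⁻¹) := by
        gcongr
        · exact norm_comp_chord_le h₂ hL0 hu
        · exact div_le_self Real.pi_pos.le hL
        · exact Real.abs_sin_le_one _
        · exact norm_comp_chord_le h₁ hL0 hu
    _ = 4 * (C₂ + π * C₁) * (1 + u ^ 2)⁻¹ := by ring

lemma norm_chordFourierInv_le [CompleteSpace E] {f f' f'' : ℝ → E} {C₀ C₁ C₂ : ℝ}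
    (hf : ∀ x, HasDerivAt f (f' x) x) (hf' : ∀ x, HasDerivAt f' (f'' x) x) (hf'' : Continuous f'')
    (heven : ∀ x, f (-x) = f x) (h₀ : ∀ x, ‖f x‖ ≤ C₀ * (1 + x ^ 2)⁻¹)
    (h₁ : ∀ x, ‖f' x‖ ≤ C₁ * (1 + x ^ 2)⁻¹) (h₂ : ∀ x, ‖f'' x‖ ≤ C₂ * (1 + x ^ 2)⁻¹)
    (hL : 1 ≤ L) (p : ℤ) :
    ‖chordFourierInv f L (p / L)‖ ≤
      4 * (C₀ + C₂ + π * C₁) * π * (1 + (p / L : ℝ) ^ 2)⁻¹ := by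
  have hL0 : 0 < L := by linarith
  have hc' : Continuous f' := continuous_iff_continuousAt.2 fun x => (hf' x).continuousAt
  have value_le : ‖chordFourierInv f L (p / L)‖ ≤ 4 * C₀ * π :=
    norm_fourierInv_le_mul_pi
      (norm_cutoff_le hL0.le fun _ hu => norm_comp_chord_le h₀ hL0 hu) _
  have deriv₂_le : ‖𝓕⁻ (cutoff L (chordDeriv₂ f' f'' L)) (p / L)‖ ≤ 4 * (C₂ + π * C₁) * π :=
    norm_fourierInv_le_mul_pi
      (norm_cutoff_le hL0.le fun _ hu => norm_chordDeriv₂_le hL h₁ h₂ hu) _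
  rw [norm_fourierInv_cutoff_deriv_deriv hL0 (hasDerivAt_comp_chord hL0.ne' hf)
    (hasDerivAt_chordDeriv hL0.ne' hf') (continuous_chordDeriv₂ hc' hf'' L)
    (comp_chord_neg heven L _).symm (chordDeriv_half_eq f' hL0.ne') p] at deriv₂_le
  have sq_mul_le : (p / L : ℝ) ^ 2 * ‖chordFourierInv f L (p / L)‖ ≤ 4 * (C₂ + π * C₁) * π := by
    refine le_trans ?_ deriv₂_le
    rw [mul_assoc]
    exact le_mul_of_one_le_left (by positivity) (by nlinarith [Real.pi_gt_three])
  rw [← div_eq_mul_inv, le_div_iff₀ (by positivity)]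
  linarith

lemma exists_norm_chordFourierInv_le [CompleteSpace E] (f : 𝓢(ℝ, E)) (heven : ∀ x, f (-x) = f x) :
    ∃ K, ∀ L : ℝ, 1 ≤ L → ∀ p : ℤ,
      ‖chordFourierInv f L (p / L)‖ ≤ K * (1 + (p / L : ℝ) ^ 2)⁻¹ := by
  set f' := SchwartzMap.derivCLM ℝ E f
  set f'' := SchwartzMap.derivCLM ℝ E f'
  obtain ⟨C₀, h₀⟩ := exists_norm_schwartzMap_le f
  obtain ⟨C₁, h₁⟩ := exists_norm_schwartzMap_le f'
  obtain ⟨C₂, h₂⟩ := exists_norm_schwartzMap_le f''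
  exact ⟨_, fun L hL p => norm_chordFourierInv_le f.hasDerivAt f'.hasDerivAt f''.continuous heven
    h₀ h₁ h₂ hL p⟩

lemma tendstoUniformly_chordFourierInv (f : 𝓢(ℝ, E)) :
    TendstoUniformly (chordFourierInv f) (𝓕⁻ f : 𝓢(ℝ, E)) atTop := by
  obtain ⟨C, hC⟩ := exists_norm_schwartzMap_le f
  rw [SchwartzMap.fourierInv_coe]
  exact tendstoUniformly_fourierInv
    (fun L => integrable_cutoff (f.continuous.comp (continuous_chord L)) L) f.integrable
    (tendsto_integral_norm_cutoff_comp_chord_sub f.continuous hC)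

lemma mul_integral_comp_sin_eq_chordFourierInv (f : ℝ → ℂ) (hL : 0 < L) (p : ℤ) :
    (L : ℂ) * ∫ t in (-(1/2) : ℝ)..(1/2 : ℝ), f ((L / π) * Real.sin (π * t)) *
      Complex.exp (2 * π * Complex.I * (p : ℂ) * (t : ℂ)) = chordFourierInv f L (p / L) := by
  have subst := intervalIntegral.smul_integral_comp_mul_left (a := -(1/2)) (b := 1/2)
    (fun u => (𝐞 (u * (p / L)) : ℂ) • (f ∘ chord L) u) L
  rw [chordFourierInv, fourierInv_cutoff_eq_intervalIntegral hL.le,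
    show -(L / 2) = L * -(1 / 2) by ring, show L / 2 = L * (1 / 2) by ring, ← subst,
    Complex.real_smul]
  congr 2 with t
  have frequency : L * t * (p / L) = t * p := by field_simp
  rw [frequency, Real.fourierChar_apply, Function.comp_apply, chord, mul_div_cancel_left₀ t hL.ne',
    smul_eq_mul, mul_comm]
  congr 2
  push_cast
  ring

end ChordFourierInv

/-! ### Riemann sums over `ℤ` -/

section RiemannSum

variable {E : Type*} [NormedAddCommGroup E] [NormedSpace ℝ E] [CompleteSpace E]

lemma abs_floor_div_sub_le {L : ℝ} (hL : 0 < L) (s : ℝ) : |⌊L * s⌋ / L - s| ≤ 1 / L := by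
  have hfloor : |(⌊L * s⌋ : ℝ) - L * s| ≤ 1 := by
    rw [abs_le]
    constructor <;> linarith [Int.floor_le (L * s), Int.lt_floor_add_one (L * s)]
  have : (⌊L * s⌋ : ℝ) / L - s = (⌊L * s⌋ - L * s) / L := by field_simp
  rw [this, abs_div, abs_of_pos hL]
  gcongr

lemma tendsto_floor_div (s : ℝ) : Tendsto (fun L : ℝ => ⌊L * s⌋ / L) atTop (𝓝 s) := by
  rw [tendsto_iff_norm_sub_tendsto_zero]
  refine squeeze_zero' (.of_forall fun _ => norm_nonneg _) ?_
    (tendsto_const_nhds.div_atTop tendsto_id : Tendsto (fun L : ℝ => 1 / L) atTop (𝓝 0))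
  filter_upwards [eventually_gt_atTop 0] with L hL
  exact abs_floor_div_sub_le hL s

lemma inv_one_add_floor_div_sq_le {L : ℝ} (hL : 1 ≤ L) (s : ℝ) :
    (1 + (⌊L * s⌋ / L : ℝ) ^ 2)⁻¹ ≤ 3 * (1 + s ^ 2)⁻¹ := by
  set q : ℝ := ⌊L * s⌋ / L
  have hL0 : 0 < L := by linarith
  have hq : (q - s) ^ 2 ≤ 1 :=
    (sq_le_one_iff_abs_le_one _).2 ((abs_floor_div_sub_le hL0 s).trans ((div_le_one hL0).2 hL))
  rw [← div_eq_mul_inv, inv_le_comm₀ (by positivity) (by positivity), inv_div,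
    div_le_iff₀' three_pos]
  nlinarith [sq_nonneg (2 * q - s)]

lemma inv_smul_tsum_eq_integral_floor {φ : ℤ → E} {L : ℝ} (hL : 0 < L)
    (hφ : Integrable fun s : ℝ => φ ⌊L * s⌋) : L⁻¹ • ∑' p, φ p = ∫ s : ℝ, φ ⌊L * s⌋ := by
  have hint : Integrable fun x : ℝ => φ ⌊x⌋ :=
    (integrable_comp_mul_left_iff (fun x : ℝ => φ ⌊x⌋) hL.ne').1 hφ
  have integral_step (p : ℤ) : ∫ x in (0 + p : ℝ)..(0 + p + 1), φ ⌊x⌋ = φ p := by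
    rw [intervalIntegral.integral_congr_Ioo_of_le (g := fun _ => φ p) (by linarith)]
    · simp
    · intro x hx
      rw [zero_add] at hx
      exact congrArg φ (Int.floor_eq_iff.2 ⟨hx.1.le, hx.2⟩)
  have hsum := hint.hasSum_intervalIntegral 0
  simp only [integral_step] at hsum
  rw [Measure.integral_comp_mul_left (fun x : ℝ => φ ⌊x⌋) L, hsum.tsum_eq,
    abs_of_pos (by positivity)]

lemma tendsto_inv_smul_tsum {Φ : ℝ → ℤ → E} {φ : ℝ → E} {C : ℝ}
    (hbound : ∀ᶠ L in atTop, ∀ p : ℤ, ‖Φ L p‖ ≤ C * (1 + (p / L : ℝ) ^ 2)⁻¹)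
    (hlim : ∀ s, Tendsto (fun L => Φ L ⌊L * s⌋) atTop (𝓝 (φ s))) :
    Tendsto (fun L : ℝ => L⁻¹ • ∑' p, Φ L p) atTop (𝓝 (∫ s, φ s)) := by
  have hmeas (L : ℝ) : AEStronglyMeasurable (fun s : ℝ => Φ L ⌊L * s⌋) :=
    (StronglyMeasurable.of_discrete.comp_measurable
      (Int.measurable_floor.comp (measurable_const_mul L))).aestronglyMeasurable
  have hdom : ∀ᶠ L in atTop, ∀ s : ℝ, ‖Φ L ⌊L * s⌋‖ ≤ 3 * C * (1 + s ^ 2)⁻¹ := by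
    filter_upwards [hbound, eventually_ge_atTop 1] with L hL hL1 s
    have hC := nonneg_of_norm_le_mul_inv_one_add_sq (hL 0)
    calc ‖Φ L ⌊L * s⌋‖ ≤ C * (1 + (⌊L * s⌋ / L : ℝ) ^ 2)⁻¹ := hL _
      _ ≤ C * (3 * (1 + s ^ 2)⁻¹) := by gcongr; exact inv_one_add_floor_div_sq_le hL1 s
      _ = 3 * C * (1 + s ^ 2)⁻¹ := by ring
  have hint : Integrable fun s : ℝ => 3 * C * (1 + s ^ 2)⁻¹ := integrable_inv_one_add_sq.const_mul _
  refine (tendsto_integral_filter_of_dominated_convergence _ (.of_forall hmeas)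
    (hdom.mono fun L hL => .of_forall hL) hint (.of_forall hlim)).congr' ?_
  filter_upwards [hdom, eventually_gt_atTop 0] with L hL hL0
  exact (inv_smul_tsum_eq_integral_floor hL0 (hint.mono' (hmeas L) (.of_forall hL))).symm

end RiemannSum

/-! ### The resolvent -/

lemma exists_pos_forall_le_norm {X E : Type*} [TopologicalSpace X] [NormedAddCommGroup E]
    {f : X → E} {a : E} (hf : Continuous f) (hlim : Tendsto f (cocompact X) (𝓝 a)) (ha : a ≠ 0)
    (hne : ∀ x, f x ≠ 0) : ∃ δ > 0, ∀ x, δ ≤ ‖f x‖ := by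
  by_cases! h : ∀ x, ‖a‖ ≤ ‖f x‖
  · exact ⟨‖a‖, norm_pos_iff.2 ha, h⟩
  · obtain ⟨x₀, hx₀⟩ := h
    obtain ⟨x, hx⟩ := hf.norm.exists_forall_le' x₀ (hlim.norm.eventually_const_le hx₀)
    exact ⟨‖f x‖, norm_pos_iff.2 (hne x), hx⟩

lemma eventually_forall_le_norm {ι X E : Type*} [NormedAddCommGroup E] {l : Filter ι}
    {F : ι → X → E} {f : X → E} {δ ε : ℝ} (hF : TendstoUniformly F f l) (hε : ε < δ)
    (hf : ∀ x, δ ≤ ‖f x‖) : ∀ᶠ n in l, ∀ x, ε ≤ ‖F n x‖ := by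
  filter_upwards [Metric.tendstoUniformly_iff.1 hF (δ - ε) (sub_pos.2 hε)] with n hn x
  have hdist := hn x
  rw [dist_eq_norm] at hdist
  linarith [hf x, norm_sub_norm_le (f x) (F n x)]

lemma tendsto_inv_smul_tsum_resolvent {Λ : ℝ → ℝ → ℂ} {Λinf χ : ℝ → ℂ} {z : ℂ} {K : ℝ}
    (hΛ : TendstoUniformly Λ Λinf atTop)
    (hdecay : ∀ᶠ L in atTop, ∀ p : ℤ, ‖Λ L (p / L)‖ ≤ K * (1 + (p / L : ℝ) ^ 2)⁻¹)
    (hcont : Continuous Λinf) (hzero : Tendsto Λinf (cocompact ℝ) (𝓝 0))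
    (hz : ∀ s, 1 + z * Λinf s ≠ 0) (hχ : Continuous χ) (hχ_norm : ∀ s, ‖χ s‖ ≤ 1) :
    Tendsto (fun L : ℝ => L⁻¹ • ∑' p : ℤ, χ (p / L) * Λ L (p / L) / (1 + z * Λ L (p / L)))
      atTop (𝓝 (∫ s, χ s * Λinf s / (1 + z * Λinf s))) := by
  obtain ⟨δ, hδ, hle⟩ : ∃ δ > 0, ∀ s, δ ≤ ‖1 + z * Λinf s‖ :=
    exists_pos_forall_le_norm (a := 1) (by fun_prop)
      (by simpa using (hzero.const_mul z).const_add 1) one_ne_zero hz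
  have hden : ∀ᶠ L in atTop, ∀ s, δ / 2 ≤ ‖1 + z * Λ L s‖ :=
    eventually_forall_le_norm
      ((show UniformContinuous fun w : ℂ => 1 + z * w from
        (uniformContinuous_id.const_smul z).const_add 1).comp_tendstoUniformly hΛ)
      (half_lt_self hδ) hle
  refine tendsto_inv_smul_tsum (C := K / (δ / 2)) ?_ fun s => ?_
  · filter_upwards [hden, hdecay] with L hdenL hdecayL p
    rw [norm_div, norm_mul, div_mul_eq_mul_div]
    exact div_le_div₀ ((norm_nonneg _).trans (hdecayL p))
      ((mul_le_of_le_one_left (norm_nonneg _) (hχ_norm _)).trans (hdecayL p)) (half_pos hδ)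
      (hdenL _)
  · have hfloor := tendsto_floor_div s
    have hlim := hΛ.tendsto_comp hcont.continuousAt hfloor
    exact (((hχ.tendsto s).comp hfloor).mul hlim).div ((hlim.const_mul z).const_add 1) (hz s)

/-! ### The thermodynamic limit -/

lemma norm_exp_two_pi_I_mul (x s : ℝ) : ‖Complex.exp (2 * π * Complex.I * x * s)‖ = 1 := by
  rw [show 2 * π * Complex.I * x * s = (2 * π * x * s : ℝ) * Complex.I by push_cast; ring,
    Complex.norm_exp_ofReal_mul_I]

theorem continuum_thermodynamic_limit_kernel_general (g : 𝓢(ℝ, ℂ))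
    (hg_even : ∀ u : ℝ, g (-u) = g u)
    (laminf : ℝ → ℂ)
    (hlaminf : ∀ s : ℝ, laminf s =
      ∫ t : ℝ, g t * Complex.exp (2 * π * Complex.I * (s : ℂ) * (t : ℂ)))
    (z : ℂ) (hz : ∀ s : ℝ, 1 + z * laminf s ≠ 0)
    (lamL : ℝ → ℤ → ℂ)
    (hlamL : ∀ (L : ℝ) (p : ℤ), lamL L p =
      (L : ℂ) * ∫ t in (-(1/2) : ℝ)..(1/2 : ℝ),
        g ((L / π) * Real.sin (π * t)) *
          Complex.exp (2 * π * Complex.I * (p : ℂ) * (t : ℂ)))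
    (X Y : ℝ) :
    Tendsto (fun L : ℝ =>
        (z / (L : ℂ)) * ∑' p : ℤ,
          Complex.exp (2 * π * Complex.I * ((Y : ℂ) - (X : ℂ)) * (p : ℂ) / (L : ℂ)) *
            lamL L p / (1 + z * lamL L p))
      atTop
      (𝓝 (z * ∫ s : ℝ,
          Complex.exp (2 * π * Complex.I * ((Y : ℂ) - (X : ℂ)) * (s : ℂ)) *
            laminf s / (1 + z * laminf s))) := by
  obtain rfl : laminf = 𝓕⁻ g := by
    ext s
    rw [hlaminf, SchwartzMap.fourierInv_coe, fourierInv_eq_integral_mul_exp]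
  obtain ⟨K, hK⟩ := exists_norm_chordFourierInv_le g hg_even
  have key := (tendsto_inv_smul_tsum_resolvent (tendstoUniformly_chordFourierInv g)
    ((eventually_ge_atTop 1).mono hK) (𝓕⁻ g).continuous (𝓕⁻ g).tendsto_cocompact hz
    (χ := fun s => Complex.exp (2 * π * Complex.I * (Y - X : ℝ) * s)) (by fun_prop)
    fun s => (norm_exp_two_pi_I_mul _ s).le).const_mul z
  simp only [Complex.ofReal_sub] at key
  refine key.congr' ?_
  filter_upwards [eventually_gt_atTop 0] with L hL
  rw [Complex.real_smul, Complex.ofReal_inv, ← mul_assoc, ← div_eq_mul_inv]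
  congr 2 with p
  rw [hlamL, mul_integral_comp_sin_eq_chordFourierInv g hL, Complex.ofReal_div,
    Complex.ofReal_intCast, mul_div_assoc _ (p : ℂ)]

/-- thermodynamic limit of the correlation kernel on the continuum: in the setting
of the continuum circulant `L`-ensemble with even Schwartz symbol `g`, nonnegative Fourier
transform `λ^∞`, fugacity `z > 0`, and eigenvalues `λ_p^{(L)}` with `1 + zλ_p^{(L)} > 0`, for all
real `X, Y`:
`lim_{L→∞} (z/L) Σ_{p∈ℤ} e^{2πi(Y-X)p/L} λ_p^{(L)}/(1 + zλ_p^{(L)})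
  = z ∫_{-∞}^∞ e^{2πi(Y-X)s} λ^∞(s)/(1 + zλ^∞(s)) ds`. -/
theorem continuum_thermodynamic_limit_kernel (g : SchwartzMap ℝ ℝ)
    (hg_even : ∀ u : ℝ, g (-u) = g u)
    (laminf : ℝ → ℝ)
    (hlaminf : ∀ s : ℝ, (laminf s : ℂ) =
      ∫ t : ℝ, (g t : ℂ) * Complex.exp (2 * Real.pi * Complex.I * (s : ℂ) * (t : ℂ)))
    (hlaminf_pos : ∀ s : ℝ, 0 ≤ laminf s)
    (z : ℝ) (hz : 0 < z)
    (lamL : ℝ → ℤ → ℝ)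
    (hlamL : ∀ (L : ℝ) (p : ℤ), (lamL L p : ℂ) =
      (L : ℂ) * ∫ t in (-(1/2) : ℝ)..(1/2 : ℝ),
        (g ((L / Real.pi) * Real.sin (Real.pi * t)) : ℂ) *
          Complex.exp (2 * Real.pi * Complex.I * (p : ℂ) * (t : ℂ)))
    (hpos : ∀ L : ℝ, 0 < L → ∀ p : ℤ, 0 < 1 + z * lamL L p)
    (X Y : ℝ) :
    Tendsto (fun L : ℝ =>
        ((z : ℂ) / (L : ℂ)) * ∑' p : ℤ,
          Complex.exp (2 * Real.pi * Complex.I * ((Y : ℂ) - (X : ℂ)) * (p : ℂ) / (L : ℂ)) *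
            (lamL L p : ℂ) / (1 + (z : ℂ) * (lamL L p : ℂ)))
      atTop
      (𝓝 ((z : ℂ) * ∫ s : ℝ,
          Complex.exp (2 * Real.pi * Complex.I * ((Y : ℂ) - (X : ℂ)) * (s : ℂ)) *
            (laminf s : ℂ) / (1 + (z : ℂ) * (laminf s : ℂ)))) :=
  continuum_thermodynamic_limit_kernel_general (g.postcompCLM Complex.ofRealCLM)
    (fun u => congrArg Complex.ofReal (hg_even u)) (fun s => laminf s) hlaminf z
    (fun s => mod_cast (add_pos_of_pos_of_nonneg one_pos (mul_nonneg hz.le (hlaminf_pos s))).ne')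
    (fun L p => lamL L p) hlamL X Y
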